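/- Let (A, ι) and (B, ζ) be 𝒦-algebras and let X be an A–B Hilbert bimodule. When X is regarded as a (C(A,ι) ⊗ 𝒦)–(C(B,ζ) ⊗ 𝒦) Hilbert bimodule via the canonical isomorphisms A ≅ C(A,ι) ⊗ 𝒦 and B ≅ C(B,ζ) ⊗ 𝒦, there is an isomorphism of (C(A,ι) ⊗ 𝒦)–(C(B,ζ) ⊗ 𝒦) Hilbert bimodules C(X, ι, ζ) ⊗ 𝒦 → X given on elementary tensors by x ⊗ k ↦ x·ζ(k). -/

import Mathlib

/-!
Fix matrix units `e_{pq}` in `𝒦`. Properties (i), (iii), (iv) are formal consequences of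
`ι(k)·m = m·ζ(k)` and the bimodule laws of `M(X)`. The content lies in the density (ii), that is,
in producing enough elements of `C(X, ι, ζ)`.

By nondegeneracy and since `A·X` and `X·B` are dense in `X`, the corner elements
`u_p · x · v_q⋆`, with `u_p = ι(e_{p0}) a` and `v_q = ζ(e_{q0}) b`, have dense span in `X`
(`HilbertBimodule.mem_of_corner_mem`). For fixed `a, b, x` all of them have the form
`m · ζ(e_{pq})` for the single multiplier `m = ∑ₖ u_k · x · v_k⋆`, the sum being strictly
convergent (`MultiplierBimodule.exists_mem_bimodRelComm`).

To make sense of `m` (`HilbertBimodule.exists_column`), consider the partial sums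
`F_n y = ∑_{k<n} u_k · x · (v_k⋆ y)`, with adjoints `G_n z = ∑_{k<n} v_k ⟨x, u_k⋆ · z⟩`. Since
`u_k⋆ u_l = δ_{kl} u_0⋆ u_0`, the composite `G_n F_n` is multiplication by
`∑_{k<n} v_k ⟨u_0·x, u_0·x⟩ v_k⋆`, a sum of conjugates of one positive element along a column of
matrix units, so its norm is bounded independently of `n` (`norm_sum_conj_le`). Hence `F_n` and
`G_n` are uniformly bounded; on the elements `ζ(e_{p0}) y` and `ι(e_{p0}) a' · t`, which have dense
span, they are eventually constant. So both converge strongly, and the limits define the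
adjointable map `m : B → X`. That `m` lies in `C(X, ι, ζ)` is checked on matrix units and extended
by linearity and continuity (`MultiplierBimodule.mem_bimodRelComm`).
-/

open scoped MultiplierAlgebra

noncomputable section

/-! ## Framework

`𝓜(ℂ, A)` is the multiplier algebra `M(A)` of a (non-unital) C⋆-algebra `A`
(Mathlib's `DoubleCentralizer`), and `(a : 𝓜(ℂ, A))` is the canonical image of `a : A`
in it. -/

/-- A system of matrix units `{u i j}` (indexed by `ℕ`) in a non-unital C⋆-algebra `K`,
whose linear span is dense.  A C⋆-algebra carrying such a system is precisely (i.e., is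
⋆-isomorphic to) the C⋆-algebra `𝒦` of compact operators on a separable
infinite-dimensional Hilbert space. -/
structure MatrixUnits (K : Type*) [NonUnitalCStarAlgebra K] where
  u : ℕ → ℕ → K
  u_ne_zero : ∀ i j, u i j ≠ 0
  u_mul : ∀ i j k l, u i j * u k l = if j = k then u i l else 0
  star_u : ∀ i j, star (u i j) = u j i
  dense_span : Dense (Submodule.span ℂ (Set.range fun p : ℕ × ℕ => u p.1 p.2) : Set K)

/-- `K` is (a copy of) the C⋆-algebra `𝒦` of compact operators on a separable
infinite-dimensional Hilbert space. -/
def IsCompactOperatorsAlgebra (K : Type*) [NonUnitalCStarAlgebra K] : Prop :=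
  Nonempty (MatrixUnits K)

/-- A homomorphism `φ : A → M(B)` is *nondegenerate* if `φ(A)·B` is dense in `B`. -/
def Nondegenerate {A B : Type*} [NonUnitalCStarAlgebra A] [NonUnitalCStarAlgebra B]
    (φ : A →⋆ₙₐ[ℂ] 𝓜(ℂ, B)) : Prop :=
  ∀ b : B, (b : 𝓜(ℂ, B)) ∈
    closure (Submodule.span ℂ {x : 𝓜(ℂ, B) | ∃ (a : A) (c : B), x = φ a * c} : Set 𝓜(ℂ, B))

/-- The `A`-relative commutant `C(A, ι) = {a ∈ M(A) : ι(k)·a = a·ι(k) ∈ A for all k ∈ K}`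
of a `K`-algebra `(A, ι)`. -/
def relComm {K A : Type*} [NonUnitalCStarAlgebra K] [NonUnitalCStarAlgebra A]
    (ι : K →⋆ₙₐ[ℂ] 𝓜(ℂ, A)) : Set 𝓜(ℂ, A) :=
  {a | ∀ k : K, ι k * a = a * ι k ∧ a * ι k ∈ Set.range ((↑) : A → 𝓜(ℂ, A))}

/-- An `A`–`B` Hilbert bimodule: a right Hilbert `B`-module and a left Hilbert
`A`-module satisfying the compatibility condition `⟨x, y⟩_A · z = x · ⟨y, z⟩_B`.
The right inner product `innerR x y = ⟨x, y⟩_B` is linear in the second variable, and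
the left inner product `innerL x y = ⟨x, y⟩_A` is linear in the first variable. -/
structure HilbertBimodule (A B X : Type*) [NonUnitalCStarAlgebra A] [NonUnitalCStarAlgebra B]
    [NormedAddCommGroup X] [NormedSpace ℂ X] [CompleteSpace X] where
  smulL : A → X → X
  smulR : X → B → X
  innerL : X → X → A
  innerR : X → X → B
  -- right Hilbert `B`-module axioms
  smulR_add : ∀ x b b', smulR x (b + b') = smulR x b + smulR x b'
  add_smulR : ∀ x y b, smulR (x + y) b = smulR x b + smulR y b
  smulR_mul : ∀ x b b', smulR x (b * b') = smulR (smulR x b) b'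
  smulR_csmul : ∀ (c : ℂ) x b, smulR (c • x) b = c • smulR x b
  csmul_smulR : ∀ (c : ℂ) x b, smulR x (c • b) = c • smulR x b
  innerR_add_right : ∀ x y z, innerR x (y + z) = innerR x y + innerR x z
  innerR_csmul_right : ∀ (c : ℂ) x y, innerR x (c • y) = c • innerR x y
  star_innerR : ∀ x y, star (innerR x y) = innerR y x
  innerR_smulR : ∀ x y b, innerR x (smulR y b) = innerR x y * b
  innerR_self_nonneg : ∀ x, ∃ b, innerR x x = star b * b
  norm_innerR_self : ∀ x, ‖x‖ ^ 2 = ‖innerR x x‖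
  -- left Hilbert `A`-module axioms
  smulL_add : ∀ a x y, smulL a (x + y) = smulL a x + smulL a y
  add_smulL : ∀ a a' x, smulL (a + a') x = smulL a x + smulL a' x
  smulL_mul : ∀ a a' x, smulL (a * a') x = smulL a (smulL a' x)
  smulL_csmul : ∀ (c : ℂ) a x, smulL (c • a) x = c • smulL a x
  csmul_smulL : ∀ (c : ℂ) a x, smulL a (c • x) = c • smulL a x
  innerL_add_left : ∀ x y z, innerL (x + y) z = innerL x z + innerL y z
  innerL_csmul_left : ∀ (c : ℂ) x y, innerL (c • x) y = c • innerL x y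
  star_innerL : ∀ x y, star (innerL x y) = innerL y x
  innerL_smulL : ∀ a x y, innerL (smulL a x) y = a * innerL x y
  innerL_self_nonneg : ∀ x, ∃ a, innerL x x = star a * a
  norm_innerL_self : ∀ x, ‖x‖ ^ 2 = ‖innerL x x‖
  -- the two module actions commute and are mutually adjointable
  smulL_smulR : ∀ a x b, smulR (smulL a x) b = smulL a (smulR x b)
  innerR_smulL : ∀ a x y, innerR (smulL a x) y = innerR x (smulL (star a) y)
  innerL_smulR : ∀ x y b, innerL (smulR x b) y = innerL x (smulR y (star b))
  -- the compatibility condition `⟨x, y⟩_A · z = x · ⟨y, z⟩_B`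
  compat : ∀ x y z, smulL (innerL x y) z = smulR x (innerR y z)

/-- An `A`–`B` Hilbert bimodule is *right-full* if the closed span of `⟨X, X⟩_B` is `B`. -/
def HilbertBimodule.RightFull {A B X : Type*} [NonUnitalCStarAlgebra A]
    [NonUnitalCStarAlgebra B] [NormedAddCommGroup X] [NormedSpace ℂ X] [CompleteSpace X]
    (hX : HilbertBimodule A B X) : Prop :=
  Dense (Submodule.span ℂ {b : B | ∃ x y, b = hX.innerR x y} : Set B)

/-- An `A`–`B` Hilbert bimodule is *left-full* if the closed span of `⟨X, X⟩_A` is `A`. -/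
def HilbertBimodule.LeftFull {A B X : Type*} [NonUnitalCStarAlgebra A]
    [NonUnitalCStarAlgebra B] [NormedAddCommGroup X] [NormedSpace ℂ X] [CompleteSpace X]
    (hX : HilbertBimodule A B X) : Prop :=
  Dense (Submodule.span ℂ {a : A | ∃ x y, a = hX.innerL x y} : Set A)

/-- A witness realizing `MX` as the multiplier bimodule `M(X) = 𝓛_B(B, X)` of the
`A`–`B` Hilbert bimodule `X`: an `M(A)`–`M(B)` Hilbert bimodule containing `X` such that
`M(X)·B ⊆ X` and `A·M(X) ⊆ X`, whose elements are separated by, and exhausted by,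
adjointable maps `B → X` (this is the double-centralizer description of `𝓛_B(B, X)`). -/
structure MultiplierBimodule {A B X : Type*} [NonUnitalCStarAlgebra A]
    [NonUnitalCStarAlgebra B] [NormedAddCommGroup X] [NormedSpace ℂ X] [CompleteSpace X]
    (hX : HilbertBimodule A B X) (MX : Type*) [NormedAddCommGroup MX] [NormedSpace ℂ MX] where
  embed : X →ₗ[ℂ] MX
  embed_injective : Function.Injective embed
  smulL : 𝓜(ℂ, A) → MX → MX
  smulR : MX → 𝓜(ℂ, B) → MX
  innerL : MX → MX → 𝓜(ℂ, A)
  innerR : MX → MX → 𝓜(ℂ, B)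
  -- module and inner-product laws
  smulL_add : ∀ n m m', smulL n (m + m') = smulL n m + smulL n m'
  add_smulL : ∀ n n' m, smulL (n + n') m = smulL n m + smulL n' m
  smulL_mul : ∀ n n' m, smulL (n * n') m = smulL n (smulL n' m)
  smulR_add : ∀ m n n', smulR m (n + n') = smulR m n + smulR m n'
  add_smulR : ∀ m m' n, smulR (m + m') n = smulR m n + smulR m' n
  smulR_mul : ∀ m n n', smulR m (n * n') = smulR (smulR m n) n'
  smulL_smulR : ∀ n m n', smulR (smulL n m) n' = smulL n (smulR m n')
  smulL_one : ∀ m, smulL 1 m = m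
  smulR_one : ∀ m, smulR m 1 = m
  innerR_add_right : ∀ m m' m'', innerR m (m' + m'') = innerR m m' + innerR m m''
  star_innerR : ∀ m m', star (innerR m m') = innerR m' m
  innerR_smulR : ∀ m m' n, innerR m (smulR m' n) = innerR m m' * n
  innerR_smulL : ∀ n m m', innerR (smulL n m) m' = innerR m (smulL (star n) m')
  innerL_add_left : ∀ m m' m'', innerL (m + m') m'' = innerL m m'' + innerL m' m''
  star_innerL : ∀ m m', star (innerL m m') = innerL m' m
  innerL_smulL : ∀ n m m', innerL (smulL n m) m' = n * innerL m m'
  innerL_smulR : ∀ m m' n, innerL (smulR m n) m' = innerL m (smulR m' (star n))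
  -- compatibility with the bimodule structure of `X`
  embed_smulL : ∀ (a : A) (x : X), smulL (a : 𝓜(ℂ, A)) (embed x) = embed (hX.smulL a x)
  embed_smulR : ∀ (x : X) (b : B), smulR (embed x) (b : 𝓜(ℂ, B)) = embed (hX.smulR x b)
  embed_innerR : ∀ x y : X, innerR (embed x) (embed y) = ((hX.innerR x y : B) : 𝓜(ℂ, B))
  embed_innerL : ∀ x y : X, innerL (embed x) (embed y) = ((hX.innerL x y : A) : 𝓜(ℂ, A))
  -- `X` sits as an "ideal" in `MX`
  smulR_coe_mem : ∀ (m : MX) (b : B), smulR m (b : 𝓜(ℂ, B)) ∈ Set.range embed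
  coe_smulL_mem : ∀ (a : A) (m : MX), smulL (a : 𝓜(ℂ, A)) m ∈ Set.range embed
  -- elements of `MX` are exactly the adjointable maps `B → X` (i.e. `MX = 𝓛_B(B, X)`)
  ext_right : ∀ m m' : MX, (∀ b : B, smulR m (b : 𝓜(ℂ, B)) = smulR m' (b : 𝓜(ℂ, B))) → m = m'
  exists_of_adjointable : ∀ (f : B → X) (g : X → B),
    (∀ b b', f (b + b') = f b + f b') →
    (∀ b b', f (b * b') = hX.smulR (f b) b') →
    (∀ b x, hX.innerR (f b) x = star b * g x) →
    ∃ m : MX, ∀ b : B, smulR m (b : 𝓜(ℂ, B)) = embed (f b)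

/-- The relative commutant
`C(X, ι, ζ) = {x ∈ M(X) : ι(k)·x = x·ζ(k) ∈ X for all k ∈ 𝒦}` of a pair of `𝒦`-algebra
structures on the coefficient algebras of a Hilbert bimodule `X`. -/
def bimodRelComm {K A B X MX : Type*} [NonUnitalCStarAlgebra K] [NonUnitalCStarAlgebra A]
    [NonUnitalCStarAlgebra B] [NormedAddCommGroup X] [NormedSpace ℂ X] [CompleteSpace X]
    [NormedAddCommGroup MX] [NormedSpace ℂ MX]
    (ι : K →⋆ₙₐ[ℂ] 𝓜(ℂ, A)) (ζ : K →⋆ₙₐ[ℂ] 𝓜(ℂ, B))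
    {hX : HilbertBimodule A B X} (mX : MultiplierBimodule hX MX) : Set MX :=
  {m | ∀ k : K, mX.smulL (ι k) m = mX.smulR m (ζ k) ∧ mX.smulR m (ζ k) ∈ Set.range mX.embed}

section Helpers

open Filter Topology

/-! ### Multiplier algebras and density -/

variable {K A B X MX : Type*} [NonUnitalCStarAlgebra K] [NonUnitalCStarAlgebra A]
  [NonUnitalCStarAlgebra B] [NormedAddCommGroup X] [NormedSpace ℂ X] [CompleteSpace X]
  [NormedAddCommGroup MX] [NormedSpace ℂ MX]

lemma coe_norm (a : A) : ‖(a : 𝓜(ℂ, A))‖ = ‖a‖ := by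
  rw [← DoubleCentralizer.norm_fst, DoubleCentralizer.coe_fst]
  simp

lemma coe_inj {a b : A} (h : (a : 𝓜(ℂ, A)) = b) : a = b := by
  have h1 : (DoubleCentralizer.coeHom (𝕜 := ℂ) (a - b) : 𝓜(ℂ, A)) = 0 := by
    rw [map_sub]; exact sub_eq_zero.2 h
  have h2 : ‖a - b‖ = 0 := by
    rw [← coe_norm]; exact norm_eq_zero.2 h1
  exact sub_eq_zero.1 (norm_eq_zero.1 h2)

lemma coe_mul' (a b : A) : ((a * b : A) : 𝓜(ℂ, A)) = a * b :=
  map_mul (DoubleCentralizer.coeHom (𝕜 := ℂ) (A := A)) a b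

lemma coe_star' (a : A) : ((star a : A) : 𝓜(ℂ, A)) = star (a : 𝓜(ℂ, A)) :=
  map_star (DoubleCentralizer.coeHom (𝕜 := ℂ) (A := A)) a

lemma coe_sum' {κ : Type*} (s : Finset κ) (f : κ → A) :
    ((∑ k ∈ s, f k : A) : 𝓜(ℂ, A)) = ∑ k ∈ s, (f k : 𝓜(ℂ, A)) :=
  map_sum (DoubleCentralizer.coeHom (𝕜 := ℂ) (A := A)) f s

lemma fst_mul' (n : 𝓜(ℂ, A)) (a b : A) : n.fst (a * b) = n.fst a * b := by
  have key : ∀ d : A, d * (n.fst (a * b) - n.fst a * b) = 0 := fun d => by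
    rw [mul_sub, ← mul_assoc, ← n.central, ← n.central, mul_assoc, sub_self]
  exact sub_eq_zero.1 (CStarRing.star_mul_self_eq_zero_iff _ |>.1 (key _))

lemma snd_mul' (n : 𝓜(ℂ, A)) (a b : A) : n.snd (a * b) = a * n.snd b := by
  have key : ∀ d : A, (n.snd (a * b) - a * n.snd b) * d = 0 := fun d => by
    rw [sub_mul, mul_assoc a, n.central, n.central, mul_assoc, sub_self]
  exact sub_eq_zero.1 (CStarRing.mul_star_self_eq_zero_iff _ |>.1 (key _))

/-- `A` is a left ideal of `M(A)`: the product `n * a` is the image of `n.fst a`. -/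
lemma coe_fst_apply (n : 𝓜(ℂ, A)) (a : A) : ((n.fst a : A) : 𝓜(ℂ, A)) = n * a := by
  apply DoubleCentralizer.ext
  refine Prod.ext ?_ ?_ <;> ext b
  · change n.fst a * b = n.fst (a * b)
    rw [fst_mul']
  · change b * n.fst a = n.snd b * a
    rw [n.central]

lemma star_fst_mul (n : 𝓜(ℂ, A)) (a c : A) :
    star (n.fst a) * c = star a * (star n).fst c := by
  apply coe_inj
  simp only [coe_mul', coe_star', coe_fst_apply, star_mul, mul_assoc]

lemma fst_fst (n n' : 𝓜(ℂ, A)) (a : A) : n.fst (n'.fst a) = (n * n').fst a := rfl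

/-- A closed linear condition that holds on a family with dense span holds everywhere. -/
lemma dense_span_induction {E : Type*} [NormedAddCommGroup E] [NormedSpace ℂ E] {S : Set E}
    (hS : Dense (Submodule.span ℂ S : Set E)) {P : E → Prop} (mem : ∀ x ∈ S, P x)
    (zero : P 0) (hadd : ∀ x y, P x → P y → P (x + y)) (smul : ∀ (c : ℂ) x, P x → P (c • x))
    (closed : IsClosed {x | P x}) (x : E) : P x := by
  refine hS.induction (P := P) (fun y hy => ?_) closed x
  exact Submodule.span_induction (p := fun x _ => P x) mem zero (fun x y _ _ => hadd x y)
    (fun c x _ => smul c x) hy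

/-- A uniformly bounded sequence of operators converging on a family with dense span
converges strongly. -/
lemma exists_tendsto_of_dense {E F : Type*} [NormedAddCommGroup E] [NormedSpace ℂ E]
    [NormedAddCommGroup F] [NormedSpace ℂ F] [CompleteSpace F] {S : Set E}
    (hS : Dense (Submodule.span ℂ S : Set E)) (T : ℕ → E →L[ℂ] F) (C : ℝ)
    (hC : ∀ n x, ‖T n x‖ ≤ C * ‖x‖)
    (hT : ∀ x ∈ S, ∃ y, Tendsto (fun n => T n x) atTop (𝓝 y)) (x : E) :
    ∃ y, Tendsto (fun n => T n x) atTop (𝓝 y) := by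
  suffices h : CauchySeq (fun n => T n x) from cauchySeq_tendsto_of_complete h
  refine dense_span_induction hS (P := fun x => CauchySeq (fun n => T n x)) ?_ ?_ ?_ ?_ ?_ x
  · intro x hx
    obtain ⟨y, hy⟩ := hT x hx
    exact hy.cauchySeq
  · simpa using cauchySeq_const (0 : F)
  · intro x y hx hy
    obtain ⟨a, ha⟩ := cauchySeq_tendsto_of_complete hx
    obtain ⟨b, hb⟩ := cauchySeq_tendsto_of_complete hy
    simpa using (ha.add hb).cauchySeq
  · intro c x hx
    obtain ⟨a, ha⟩ := cauchySeq_tendsto_of_complete hx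
    simpa using (ha.const_smul c).cauchySeq
  · rw [← isSeqClosed_iff_isClosed]
    intro xs x hxs hx
    simp only [Set.mem_ofPred_eq] at hxs ⊢
    rw [Metric.cauchySeq_iff']
    intro ε hε
    -- the constant `C` may vanish, so `|C| + 1` serves as a positive bound
    have hC' : 0 < |C| + 1 := by positivity
    obtain ⟨j, hj⟩ := ((Metric.tendsto_atTop.1 hx) (ε / 3 / (|C| + 1)) (by positivity))
    have hj := hj j le_rfl
    obtain ⟨N, hN⟩ := Metric.cauchySeq_iff'.1 (hxs j) (ε / 3) (by positivity)
    refine ⟨N, fun n hn => ?_⟩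
    have h1 : ∀ n, dist (T n x) (T n (xs j)) < ε / 3 := fun n => by
      rw [dist_eq_norm, ← map_sub]
      rw [dist_comm, dist_eq_norm, lt_div_iff₀ hC'] at hj
      calc _ ≤ C * ‖x - xs j‖ := hC _ _
        _ ≤ ‖x - xs j‖ * (|C| + 1) := by
          nlinarith [norm_nonneg (x - xs j), le_abs_self C]
        _ < _ := hj
    have h2 := hN n hn
    have h3 := h1 n
    have h4 := h1 N
    rw [dist_comm] at h4
    linarith [dist_triangle4 (T n x) (T n (xs j)) (T N (xs j)) (T N x)]

lemma tendsto_sum_single {F : Type*} [NormedAddCommGroup F] (w : ℕ → F) (p : ℕ)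
    (h : ∀ k, k ≠ p → w k = 0) :
    Tendsto (fun n => ∑ k ∈ Finset.range n, w k) atTop (𝓝 (w p)) :=
  (hasSum_single p h).tendsto_sum_nat

lemma continuous_fst_apply (φ : K →⋆ₙₐ[ℂ] 𝓜(ℂ, A)) (a : A) : Continuous fun k => (φ k).fst a := by
  have hcont : Continuous φ := by
    have := NonUnitalStarAlgHom.norm_apply_le φ
    exact AddMonoidHomClass.continuous_of_bound φ 1 (by simpa using this)
  have h2 : ∀ x y : 𝓜(ℂ, A), ‖x.fst a - y.fst a‖ ≤ ‖a‖ * ‖x - y‖ := fun x y => by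
    rw [← _root_.sub_apply, ← DoubleCentralizer.sub_fst,
      ← DoubleCentralizer.norm_fst (a := x - y), mul_comm]
    exact ContinuousLinearMap.le_opNorm _ _
  have h3 : Continuous fun x : 𝓜(ℂ, A) => x.fst a :=
    (LipschitzWith.of_dist_le_mul (K := ‖a‖₊) fun x y => by
      simpa [dist_eq_norm] using h2 x y).continuous
  exact h3.comp hcont

/-- The elements `φ(e_{p0}) b` have dense span if `φ` is nondegenerate. -/
lemma Nondegenerate.dense_span (U : MatrixUnits K) {φ : K →⋆ₙₐ[ℂ] 𝓜(ℂ, A)}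
    (hφ : Nondegenerate φ) :
    Dense (Submodule.span ℂ {c : A | ∃ (p : ℕ) (a : A), c = (φ (U.u p 0)).fst a} : Set A) := by
  set S := {c : A | ∃ (p : ℕ) (a : A), c = (φ (U.u p 0)).fst a} with hS
  set W := (Submodule.span ℂ S).topologicalClosure with hW
  have hWc : IsClosed (W : Set A) := Submodule.isClosed_topologicalClosure _
  have hmem : ∀ (k : K) (a : A), (φ k).fst a ∈ W := fun k a => by
    refine dense_span_induction U.dense_span (P := fun k => (φ k).fst a ∈ W) ?_ ?_ ?_ ?_ ?_ k
    · rintro _ ⟨⟨p, q⟩, rfl⟩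
      refine Submodule.le_topologicalClosure _ (Submodule.subset_span
        ⟨p, (φ (U.u 0 q)).fst a, ?_⟩)
      rw [fst_fst, ← map_mul, U.u_mul, if_pos rfl]
    · simp
    · intro x y hx hy
      simpa using W.add_mem hx hy
    · intro c x hx
      simpa using W.smul_mem c hx
    · exact hWc.preimage (continuous_fst_apply φ a)
  intro b
  change b ∈ W
  have hiso : Isometry (DoubleCentralizer.coeHom (𝕜 := ℂ) (A := A)) :=
    AddMonoidHomClass.isometry_of_norm _ coe_norm
  have hb := hφ b
  have hsub : (Submodule.span ℂ {x : 𝓜(ℂ, A) | ∃ (a : K) (c : A), x = φ a * c} : Set 𝓜(ℂ, A))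
      ⊆ DoubleCentralizer.coeHom (𝕜 := ℂ) (A := A) '' W := by
    intro x hx
    have : x ∈ W.map (DoubleCentralizer.coeHom (𝕜 := ℂ) (A := A) : A →ₗ[ℂ] 𝓜(ℂ, A)) := by
      refine Submodule.span_le.2 ?_ hx
      rintro _ ⟨k, c, rfl⟩
      exact ⟨_, hmem k c, coe_fst_apply _ _⟩
    exact this
  have hcl : IsClosed (DoubleCentralizer.coeHom (𝕜 := ℂ) (A := A) '' W) :=
    hiso.isClosedEmbedding.isClosedMap _ hWc
  obtain ⟨w, hw, hwb⟩ := closure_minimal hsub hcl hb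
  rwa [← coe_inj (a := w) (b := b) hwb]


/-! ### Boundedness of the operations of a Hilbert bimodule -/

namespace HilbertBimodule

variable (hX : HilbertBimodule A B X)

lemma norm_smulL_le (a : A) (x : X) : ‖hX.smulL a x‖ ≤ ‖a‖ * ‖x‖ := by
  refine le_of_sq_le_sq ?_ (by positivity)
  have h : hX.innerL (hX.smulL a x) (hX.smulL a x) = a * hX.innerL x x * star a := by
    rw [hX.innerL_smulL, ← hX.star_innerL, hX.innerL_smulL, star_mul, hX.star_innerL, mul_assoc]
  rw [hX.norm_innerL_self, h, mul_pow, hX.norm_innerL_self]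
  calc _ ≤ ‖a‖ * ‖hX.innerL x x‖ * ‖star a‖ := by
        refine (norm_mul_le _ _).trans ?_
        gcongr
        exact norm_mul_le _ _
    _ = _ := by rw [norm_star]; ring

lemma norm_smulR_le (x : X) (b : B) : ‖hX.smulR x b‖ ≤ ‖x‖ * ‖b‖ := by
  refine le_of_sq_le_sq ?_ (by positivity)
  have h : hX.innerR (hX.smulR x b) (hX.smulR x b) = star b * hX.innerR x x * b := by
    rw [hX.innerR_smulR, ← hX.star_innerR, hX.innerR_smulR, star_mul, hX.star_innerR]
  rw [hX.norm_innerR_self, h, mul_pow, hX.norm_innerR_self]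
  calc _ ≤ ‖star b‖ * ‖hX.innerR x x‖ * ‖b‖ := by
        refine (norm_mul_le _ _).trans ?_
        gcongr
        exact norm_mul_le _ _
    _ = _ := by rw [norm_star]; ring

lemma innerR_add_left (x y z : X) :
    hX.innerR (x + y) z = hX.innerR x z + hX.innerR y z := by
  rw [← hX.star_innerR, hX.innerR_add_right, star_add, hX.star_innerR, hX.star_innerR]

lemma innerR_csmul_left (c : ℂ) (x y : X) :
    hX.innerR (c • x) y = star c • hX.innerR x y := by
  rw [← hX.star_innerR, hX.innerR_csmul_right, star_smul, hX.star_innerR]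

/-- Polarization bounds the inner product by a multiple of the norms. -/
lemma norm_innerR_le (x y : X) : ‖hX.innerR x y‖ ≤ 4 * ‖x‖ * ‖y‖ := by
  have h1 : ∀ x y : X, ‖hX.innerR x y‖ ≤ (‖x‖ + ‖y‖) ^ 2 := fun x y => by
    have hq : ∀ c : ℂ, ‖c‖ = 1 →
        ‖hX.innerR (c • x + y) (c • x + y)‖ ≤ (‖x‖ + ‖y‖) ^ 2 := fun c hc => by
      rw [← hX.norm_innerR_self]
      have : ‖c • x + y‖ ≤ ‖x‖ + ‖y‖ := by
        simpa [norm_smul, hc] using norm_add_le (c • x) y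
      gcongr
    have hpol : (4 : ℂ) • hX.innerR x y =
        (hX.innerR ((1 : ℂ) • x + y) ((1 : ℂ) • x + y)
          - hX.innerR ((-1 : ℂ) • x + y) ((-1 : ℂ) • x + y))
        + Complex.I • (hX.innerR (Complex.I • x + y) (Complex.I • x + y)
          - hX.innerR ((-Complex.I) • x + y) ((-Complex.I) • x + y)) := by
      simp only [hX.innerR_add_right, hX.innerR_add_left, hX.innerR_csmul_right,
        hX.innerR_csmul_left]
      have hI : star Complex.I = -Complex.I := Complex.conj_I
      simp only [star_neg, star_one, hI]
      match_scalars <;> norm_num [Complex.ext_iff]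
    have h4 : ‖(4 : ℂ) • hX.innerR x y‖ ≤ 4 * (‖x‖ + ‖y‖) ^ 2 := by
      rw [hpol]
      refine (norm_add_le _ _).trans ?_
      rw [norm_smul, Complex.norm_I, one_mul]
      have ha := hq 1 (by simp)
      have hb := hq (-1) (by simp)
      have hc := hq Complex.I (by simp)
      have hd := hq (-Complex.I) (by simp)
      have he := norm_sub_le (hX.innerR ((1 : ℂ) • x + y) ((1 : ℂ) • x + y))
        (hX.innerR ((-1 : ℂ) • x + y) ((-1 : ℂ) • x + y))
      have hf := norm_sub_le (hX.innerR (Complex.I • x + y) (Complex.I • x + y))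
        (hX.innerR ((-Complex.I) • x + y) ((-Complex.I) • x + y))
      linarith
    rw [norm_smul] at h4
    norm_num at h4
    linarith
  -- The estimate is rescaled to unit vectors.
  by_cases hx : x = 0
  · have : hX.innerR x y = 0 := by simpa [hx] using hX.innerR_csmul_left 0 0 y
    rw [this, norm_zero]; positivity
  by_cases hy : y = 0
  · have : hX.innerR x y = 0 := by simpa [hy] using hX.innerR_csmul_right 0 x 0
    rw [this, norm_zero]; positivity
  have hx' : ‖x‖ ≠ 0 := norm_ne_zero_iff.2 hx
  have hy' : ‖y‖ ≠ 0 := norm_ne_zero_iff.2 hy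
  have h2 := h1 (((‖x‖⁻¹ : ℝ) : ℂ) • x) (((‖y‖⁻¹ : ℝ) : ℂ) • y)
  rw [hX.innerR_csmul_left, hX.innerR_csmul_right, norm_smul, norm_smul, norm_smul, norm_smul,
    norm_star] at h2
  simp only [Complex.norm_real, norm_inv, norm_norm, inv_mul_cancel₀ hx',
    inv_mul_cancel₀ hy'] at h2
  have h3 : ‖hX.innerR x y‖ = ‖x‖ * ‖y‖ * (‖x‖⁻¹ * (‖y‖⁻¹ * ‖hX.innerR x y‖)) := by
    field_simp
  rw [h3]
  have : 0 ≤ ‖x‖ * ‖y‖ := by positivity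
  nlinarith

/-- The left action of `A` on `X` as a bounded bilinear map. -/
def lAct : A →L[ℂ] X →L[ℂ] X :=
  LinearMap.mkContinuous₂
    (LinearMap.mk₂ ℂ hX.smulL hX.add_smulL hX.smulL_csmul hX.smulL_add
      (fun c a x => hX.csmul_smulL c a x)) 1
    (fun a x => by simpa using hX.norm_smulL_le a x)

/-- The right action of `B` on `X` as a bounded bilinear map. -/
def rAct : X →L[ℂ] B →L[ℂ] X :=
  LinearMap.mkContinuous₂
    (LinearMap.mk₂ ℂ hX.smulR hX.add_smulR hX.smulR_csmul hX.smulR_add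
      (fun c a x => hX.csmul_smulR c a x)) 1
    (fun a x => by simpa using hX.norm_smulR_le a x)

/-- The `B`-valued inner product as a bounded sesquilinear map. -/
def inn : X →L⋆[ℂ] X →L[ℂ] B :=
  LinearMap.mkContinuous₂
    (LinearMap.mk₂'ₛₗ (starRingEnd ℂ) (RingHom.id ℂ) hX.innerR hX.innerR_add_left
      (fun c x y => hX.innerR_csmul_left c x y) hX.innerR_add_right
      (fun c x y => hX.innerR_csmul_right c x y)) 4
    (fun a x => by simpa using hX.norm_innerR_le a x)

lemma lAct_apply (a : A) (x : X) : hX.lAct a x = hX.smulL a x := rfl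
lemma rAct_apply (x : X) (b : B) : hX.rAct x b = hX.smulR x b := rfl
lemma inn_apply (x y : X) : hX.inn x y = hX.innerR x y := rfl

lemma innerR_sub_left (x y z : X) :
    hX.innerR (x - y) z = hX.innerR x z - hX.innerR y z := by
  rw [sub_eq_add_neg, hX.innerR_add_left, ← neg_one_smul ℂ y, hX.innerR_csmul_left]
  simp [sub_eq_add_neg]

lemma innerR_sub_right (x y z : X) :
    hX.innerR x (y - z) = hX.innerR x y - hX.innerR x z :=
  map_sub (hX.inn x) y z

lemma innerL_sub_left (x y z : X) :
    hX.innerL (x - y) z = hX.innerL x z - hX.innerL y z := by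
  rw [sub_eq_add_neg, hX.innerL_add_left, ← neg_one_smul ℂ y, hX.innerL_csmul_left,
    neg_one_smul, ← sub_eq_add_neg]

lemma innerL_sub_right (x y z : X) :
    hX.innerL x (y - z) = hX.innerL x y - hX.innerL x z := by
  rw [← hX.star_innerL, hX.innerL_sub_left, star_sub, hX.star_innerL, hX.star_innerL]

lemma eq_of_innerR {x y : X} (h : ∀ t, hX.innerR x t = hX.innerR y t) : x = y := by
  have h1 : hX.inn (x - y) (x - y) = 0 := by
    rw [inn_apply, hX.innerR_sub_left, h, sub_self]
  have h2 := hX.norm_innerR_self (x - y)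
  rw [← inn_apply, h1, norm_zero] at h2
  exact sub_eq_zero.1 (norm_eq_zero.1 (by simpa using h2))

/-- An approximate unit `e` of `B` satisfies `x · e → x`: with `c = ⟨x, x⟩`, the element
`⟨x·e - x, x·e - x⟩ = e⋆(c e - c) - (c e - c)` tends to zero. -/
lemma exists_approx_smulR (x : X) : ∃ l : Filter B, l.NeBot ∧ (∀ᶠ e in l, ‖e‖ ≤ 1) ∧
    Tendsto (fun e : B => hX.smulR x e) l (𝓝 x) := by
  let : PartialOrder B := CStarAlgebra.spectralOrder B
  have : StarOrderedRing B := CStarAlgebra.spectralOrderedRing B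
  have hl := CStarAlgebra.increasingApproximateUnit B
  set l := CStarAlgebra.approximateUnit B
  set c := hX.innerR x x
  have h1 : Tendsto (fun e : B => c * e) l (𝓝 c) := hl.tendsto_mul_left c
  have h2 : Tendsto (fun e : B => star e * (c * e - c)) l (𝓝 0) := by
    refine squeeze_zero_norm' (a := fun e => ‖c * e - c‖) ?_ ?_
    · filter_upwards [hl.eventually_norm] with e he
      refine (norm_mul_le _ _).trans ?_
      rw [norm_star]
      exact mul_le_of_le_one_left (norm_nonneg _) he
    · simpa using (h1.sub_const c).norm
  refine ⟨l, inferInstance, hl.eventually_norm, ?_⟩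
  · rw [tendsto_iff_norm_sub_tendsto_zero]
    have h4 : Tendsto (fun e : B => ‖hX.smulR x e - x‖ ^ 2) l (𝓝 0) := by
      have : ∀ e : B, ‖hX.smulR x e - x‖ ^ 2 = ‖star e * (c * e - c) - (c * e - c)‖ := by
        intro e
        have hs : hX.innerR (hX.smulR x e) x = star e * c := by
          rw [← hX.star_innerR, hX.innerR_smulR, star_mul, hX.star_innerR]
        rw [hX.norm_innerR_self, hX.innerR_sub_left, hX.innerR_sub_right, hX.innerR_sub_right]
        simp only [hX.innerR_smulR, hs]
        congr 1
        rw [mul_sub, mul_assoc]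
      simp only [this]
      simpa using (h2.sub (h1.sub_const c)).norm
    have := h4.sqrt
    simpa using this

/-- A closed subspace containing `X · B` is everything. -/
lemma mem_of_smulR_mem (V : Submodule ℂ X) (hV : IsClosed (V : Set X))
    (h : ∀ x b, hX.smulR x b ∈ V) (x : X) : x ∈ V := by
  obtain ⟨l, _, -, hl⟩ := hX.exists_approx_smulR x
  exact hV.mem_of_tendsto hl (Eventually.of_forall fun e => h x e)

lemma norm_le_of_smulR_le {x : X} {C : ℝ} (hC : 0 ≤ C) (h : ∀ b, ‖hX.smulR x b‖ ≤ C * ‖b‖) :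
    ‖x‖ ≤ C := by
  obtain ⟨l, _, h1, hl⟩ := hX.exists_approx_smulR x
  refine le_of_tendsto hl.norm ?_
  filter_upwards [h1] with e he
  exact (h e).trans (mul_le_of_le_one_right hC he)

/-- A closed subspace containing `A · X` is everything. -/
lemma mem_of_smulL_mem (V : Submodule ℂ X) (hV : IsClosed (V : Set X))
    (h : ∀ a x, hX.smulL a x ∈ V) (x : X) : x ∈ V := by
  let : PartialOrder A := CStarAlgebra.spectralOrder A
  have : StarOrderedRing A := CStarAlgebra.spectralOrderedRing A
  have hl := CStarAlgebra.increasingApproximateUnit A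
  set l := CStarAlgebra.approximateUnit A
  set c := hX.innerL x x
  have h1 : Tendsto (fun e : A => e * c) l (𝓝 c) := hl.tendsto_mul_right c
  have h2 : Tendsto (fun e : A => (e * c - c) * star e) l (𝓝 0) := by
    refine squeeze_zero_norm' (a := fun e => ‖e * c - c‖) ?_ ?_
    · filter_upwards [hl.eventually_norm] with e he
      refine (norm_mul_le _ _).trans ?_
      rw [norm_star]
      exact mul_le_of_le_one_right (norm_nonneg _) he
    · simpa using (h1.sub_const c).norm
  have h3 : Tendsto (fun e : A => hX.smulL e x) l (𝓝 x) := by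
    rw [tendsto_iff_norm_sub_tendsto_zero]
    have h4 : Tendsto (fun e : A => ‖hX.smulL e x - x‖ ^ 2) l (𝓝 0) := by
      have : ∀ e : A, ‖hX.smulL e x - x‖ ^ 2 = ‖(e * c - c) * star e - (e * c - c)‖ := by
        intro e
        have hs : hX.innerL x (hX.smulL e x) = c * star e := by
          rw [← hX.star_innerL, hX.innerL_smulL, star_mul, hX.star_innerL]
        rw [hX.norm_innerL_self, hX.innerL_sub_left, hX.innerL_sub_right, hX.innerL_sub_right, hX.innerL_smulL, hX.innerL_smulL, hs]
        congr 1
        rw [sub_mul, mul_assoc]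
        abel
      simp only [this]
      simpa using (h2.sub (h1.sub_const c)).norm
    have := h4.sqrt
    simpa using this
  exact hV.mem_of_tendsto h3 (Eventually.of_forall fun e => h e x)

end HilbertBimodule

/-! ### Columns of matrix units -/

section MatrixUnits

variable (U : MatrixUnits K) (φ : K →⋆ₙₐ[ℂ] 𝓜(ℂ, A))

lemma star_column_mul (a y : A) (k p q : ℕ) :
    star ((φ (U.u k 0)).fst a) * (φ (U.u p q)).fst y =
      if k = p then star ((φ (U.u q 0)).fst a) * y else 0 := by
  rw [star_fst_mul, fst_fst, ← map_star, U.star_u, ← map_mul, U.u_mul]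
  split_ifs
  · rw [star_fst_mul, ← map_star, U.star_u]
  · simp

/-- Conjugating a positive element along a column of matrix units does not increase norms. -/
lemma norm_sum_conj_le (d : A) (n : ℕ) :
    ‖∑ k ∈ Finset.range n, φ (U.u k 0) * ((d * star d : A) : 𝓜(ℂ, A)) * star (φ (U.u k 0))‖ ≤
      ‖d * star d‖ := by
  let : PartialOrder 𝓜(ℂ, A) := CStarAlgebra.spectralOrder _
  have : StarOrderedRing 𝓜(ℂ, A) := CStarAlgebra.spectralOrderedRing _
  have hd : (0 : 𝓜(ℂ, A)) ≤ ((d * star d : A) : 𝓜(ℂ, A)) := by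
    rw [coe_mul', coe_star']; exact mul_star_self_nonneg _
  set D : 𝓜(ℂ, A) := ((d * star d : A) : 𝓜(ℂ, A))
  have hdn : D ≤ algebraMap ℝ 𝓜(ℂ, A) ‖D‖ := IsSelfAdjoint.le_algebraMap_norm_self (.of_nonneg hd)
  set P : 𝓜(ℂ, A) := φ (∑ k ∈ Finset.range n, U.u k k) with hP
  have hPproj : IsStarProjection P := by
    refine IsStarProjection.map (f := φ) ⟨?_, ?_⟩
    · rw [IsIdempotentElem, Finset.sum_mul_sum]
      refine Finset.sum_congr rfl fun i hi => ?_
      simp only [U.u_mul]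
      rw [Finset.sum_ite_eq, if_pos hi]
    · rw [isSelfAdjoint_iff, star_sum]
      simp [U.star_u]
  have hle : ∑ k ∈ Finset.range n, φ (U.u k 0) * D * star (φ (U.u k 0)) ≤ ‖D‖ • P := by
    have : ‖D‖ • P = ∑ k ∈ Finset.range n,
        φ (U.u k 0) * algebraMap ℝ 𝓜(ℂ, A) ‖D‖ * star (φ (U.u k 0)) := by
      rw [hP, map_sum, Finset.smul_sum]
      refine Finset.sum_congr rfl fun k _ => ?_
      rw [← Algebra.commutes, ← Algebra.smul_def, smul_mul_assoc, ← map_star, ← map_mul,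
        U.star_u, U.u_mul, if_pos rfl]
    rw [this]
    exact Finset.sum_le_sum fun k _ => star_right_conjugate_le_conjugate hdn _
  have h0 : 0 ≤ ∑ k ∈ Finset.range n, φ (U.u k 0) * D * star (φ (U.u k 0)) :=
    Finset.sum_nonneg fun k _ => star_right_conjugate_nonneg hd _
  calc _ ≤ ‖‖D‖ • P‖ := CStarAlgebra.norm_le_norm_of_nonneg_of_le h0 hle
    _ = ‖D‖ * ‖P‖ := by rw [norm_smul, norm_norm]
    _ ≤ ‖D‖ := mul_le_of_le_one_right (norm_nonneg _) hPproj.norm_le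
    _ = _ := coe_norm _

end MatrixUnits

namespace HilbertBimodule

variable (hX : HilbertBimodule A B X)

/-- If the `u k` behave like a column of matrix units and the operators `∑ v_k ⟨u₀x, u₀x⟩ v_k⋆`
are uniformly bounded, the series `∑ u_k · x · v_k⋆` converges strongly, together with its
adjoint, to an adjointable map `B → X`. The sets `SB` and `SX` consist of vectors on which the
two series have only one nonzero term. -/
lemma exists_column (u : ℕ → A) (v : ℕ → B) (x : X) (C : ℝ)
    (hu : ∀ k l, star (u k) * u l = if k = l then star (u 0) * u 0 else 0)
    (hC : ∀ n, ‖∑ k ∈ Finset.range n,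
      v k * hX.innerR (hX.smulL (u 0) x) (hX.smulL (u 0) x) * star (v k)‖ ≤ C)
    {SB : Set B} (hSB : Dense (Submodule.span ℂ SB : Set B))
    (hSB' : ∀ y ∈ SB, ∃ p, ∀ k, k ≠ p → star (v k) * y = 0)
    {SX : Set X} (hSX : Dense (Submodule.span ℂ SX : Set X))
    (hSX' : ∀ z ∈ SX, ∃ p, ∀ k, k ≠ p → hX.smulL (star (u k)) z = 0) :
    ∃ (f : B →L[ℂ] X) (g : X → B),
      (∀ y, Tendsto (fun n => ∑ k ∈ Finset.range n,
        hX.smulL (u k) (hX.smulR x (star (v k) * y))) atTop (𝓝 (f y))) ∧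
      (∀ z, Tendsto (fun n => ∑ k ∈ Finset.range n,
        v k * hX.innerR x (hX.smulL (star (u k)) z)) atTop (𝓝 (g z))) ∧
      ∀ y z, hX.innerR (f y) z = star y * g z := by
  let F : ℕ → B →L[ℂ] X := fun n => ∑ k ∈ Finset.range n,
    (hX.lAct (u k)).comp ((hX.rAct x).comp (ContinuousLinearMap.mul ℂ B (star (v k))))
  let G : ℕ → X →L[ℂ] B := fun n => ∑ k ∈ Finset.range n,
    (ContinuousLinearMap.mul ℂ B (v k)).comp ((hX.inn x).comp (hX.lAct (star (u k))))
  have hF : ∀ n y, F n y = ∑ k ∈ Finset.range n, hX.smulL (u k) (hX.smulR x (star (v k) * y)) :=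
    fun n y => by simp [F, lAct_apply, rAct_apply]
  have hG : ∀ n z, G n z = ∑ k ∈ Finset.range n, v k * hX.innerR x (hX.smulL (star (u k)) z) :=
    fun n y => by simp [G, lAct_apply, inn_apply]
  have hadj : ∀ n y z, hX.innerR (F n y) z = star y * G n z := fun n y z => by
    rw [hF, hG, Finset.mul_sum, ← inn_apply, map_sum, _root_.sum_apply]
    refine Finset.sum_congr rfl fun k _ => ?_
    rw [inn_apply, hX.innerR_smulL, ← hX.star_innerR, hX.innerR_smulR, star_mul, star_mul,
      star_star, hX.star_innerR, mul_assoc]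
  -- `F n` has adjoint `G n`, so bounding `G n ∘ F n` bounds `F n`, hence also `G n`.
  have hGF : ∀ n y, G n (F n y) = (∑ k ∈ Finset.range n,
      v k * hX.innerR (hX.smulL (u 0) x) (hX.smulL (u 0) x) * star (v k)) * y := fun n y => by
    rw [hG, Finset.sum_mul]
    refine Finset.sum_congr rfl fun k hk => ?_
    have : hX.smulL (star (u k)) (F n y) =
        hX.smulL (star (u 0)) (hX.smulL (u 0) (hX.smulR x (star (v k) * y))) := by
      rw [hF, ← lAct_apply, map_sum, Finset.sum_eq_single k]
      · rw [lAct_apply, ← hX.smulL_mul, hu, if_pos rfl, hX.smulL_mul]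
      · intro l _ hl
        rw [lAct_apply, ← hX.smulL_mul, hu, if_neg (Ne.symm hl), ← lAct_apply, map_zero,
          _root_.zero_apply]
      · exact fun h => (h hk).elim
    rw [this, ← hX.innerR_smulL, ← hX.smulL_smulR, hX.innerR_smulR]
    simp only [mul_assoc]
  have hC0 : 0 ≤ C := (norm_nonneg _).trans (hC 0)
  have hFb : ∀ n y, ‖F n y‖ ≤ √C * ‖y‖ := fun n y => by
    refine le_of_sq_le_sq ?_ (by positivity)
    rw [hX.norm_innerR_self, hadj, hGF, mul_pow, Real.sq_sqrt hC0]
    calc _ ≤ ‖star y‖ * (C * ‖y‖) := by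
          refine (norm_mul_le _ _).trans ?_
          gcongr
          refine (norm_mul_le _ _).trans ?_
          gcongr
          exact hC n
      _ = _ := by rw [norm_star]; ring
  have hGb : ∀ n z, ‖G n z‖ ≤ 4 * √C * ‖z‖ := fun n z => by
    by_cases h0 : ‖G n z‖ = 0
    · rw [h0]; positivity
    have h1 : ‖G n z‖ * ‖G n z‖ ≤ 4 * (√C * ‖G n z‖) * ‖z‖ := by
      rw [← CStarRing.norm_star_mul_self, ← hadj]
      refine (hX.norm_innerR_le _ _).trans ?_
      gcongr
      exact hFb _ _
    have h2 : 0 < ‖G n z‖ := lt_of_le_of_ne (norm_nonneg _) (Ne.symm h0)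
    refine le_of_mul_le_mul_right (h1.trans (le_of_eq ?_)) h2
    ring
  choose f hf using exists_tendsto_of_dense hSB F _ hFb fun y hy => by
    obtain ⟨p, hp⟩ := hSB' y hy
    refine ⟨_, (tendsto_sum_single _ p fun k hk => ?_).congr fun n => (hF n y).symm⟩
    rw [hp k hk, ← rAct_apply, map_zero, ← lAct_apply, map_zero]
  choose g hg using exists_tendsto_of_dense hSX G _ hGb fun z hz => by
    obtain ⟨p, hp⟩ := hSX' z hz
    refine ⟨_, (tendsto_sum_single _ p fun k hk => ?_).congr fun n => (hG n z).symm⟩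
    rw [hp k hk, ← inn_apply, map_zero, mul_zero]
  refine ⟨continuousLinearMapOfTendsto F (tendsto_pi_nhds.2 hf), g, fun y => ?_, fun z => ?_,
    fun y z => ?_⟩
  · exact (hf y).congr fun n => hF n y
  · exact (hg z).congr fun n => hG n z
  · have h1 : Tendsto (fun n => hX.innerR (F n y) z) atTop (𝓝 (hX.innerR (f y) z)) :=
      ((by fun_prop : Continuous fun w => hX.inn w z).tendsto (f y)).comp (hf y)
    have h2 : Tendsto (fun n => hX.innerR (F n y) z) atTop (𝓝 (star y * g z)) := by
      simp only [hadj]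
      exact (hg z).const_mul _
    exact tendsto_nhds_unique h1 h2

/-- The elements `ι(e_{p0}) a · x · (ζ(e_{q0}) b)⋆` have dense span in `X`. -/
lemma mem_of_corner_mem (U : MatrixUnits K) {ι : K →⋆ₙₐ[ℂ] 𝓜(ℂ, A)} (hι : Nondegenerate ι)
    {ζ : K →⋆ₙₐ[ℂ] 𝓜(ℂ, B)} (hζ : Nondegenerate ζ) (V : Submodule ℂ X)
    (hV : IsClosed (V : Set X))
    (h : ∀ (p q : ℕ) (a : A) (b : B) (x : X), hX.smulL ((ι (U.u p 0)).fst a)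
      (hX.smulR x (star ((ζ (U.u q 0)).fst b))) ∈ V) (x : X) : x ∈ V := by
  refine hX.mem_of_smulL_mem V hV (fun a x => ?_) x
  refine hX.mem_of_smulR_mem (V.comap (hX.lAct a : X →ₗ[ℂ] X))
    (hV.preimage (hX.lAct a).continuous) (fun x b => ?_) x
  change hX.lAct a (hX.smulR x b) ∈ V
  refine dense_span_induction (hι.dense_span U) (P := fun a => hX.lAct a (hX.smulR x b) ∈ V)
    ?_ ?_ ?_ ?_ ?_ a
  · rintro _ ⟨p, a, rfl⟩
    rw [← star_star b]
    refine dense_span_induction (hζ.dense_span U)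
      (P := fun b => hX.lAct ((ι (U.u p 0)).fst a) (hX.rAct x (star b)) ∈ V)
      ?_ ?_ ?_ ?_ ?_ (star b)
    · rintro _ ⟨q, b, rfl⟩
      exact h p q a b x
    · simp
    · intro b b' hb hb'
      simpa using V.add_mem hb hb'
    · intro c b hb
      simpa using V.smul_mem (star c) hb
    · exact hV.preimage (by fun_prop)
  · simp
  · intro a a' ha ha'
    simpa using V.add_mem ha ha'
  · intro c a ha
    simpa using V.smul_mem c ha
  · exact hV.preimage (by fun_prop)

end HilbertBimodule

/-! ### Elements of the relative commutant of a bimodule -/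

namespace MultiplierBimodule

variable {hX : HilbertBimodule A B X} (mX : MultiplierBimodule hX MX)

lemma smulR_smulR_coe (m : MX) (n : 𝓜(ℂ, B)) (b : B) :
    mX.smulR (mX.smulR m n) b = mX.smulR m ((n.fst b : B) : 𝓜(ℂ, B)) := by
  rw [← mX.smulR_mul, coe_fst_apply]

/-- If `z = n · y` in `M(X)` with `y, z ∈ X`, then `⟨z, a·t⟩ = ⟨y, (n⋆a)·t⟩`. Pairing with `A · X`
keeps the computation inside `X`, where `M(A)` itself is not known to act. -/
lemma innerR_smulL_embed (n : 𝓜(ℂ, A)) {y z : X} (h : mX.smulL n (mX.embed y) = mX.embed z)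
    (a : A) (t : X) :
    hX.innerR z (hX.smulL a t) = hX.innerR y (hX.smulL ((star n).fst a) t) := by
  apply coe_inj
  rw [← mX.embed_innerR, ← mX.embed_innerR, ← h, mX.innerR_smulL, ← mX.embed_smulL,
    ← mX.embed_smulL, ← mX.smulL_mul, coe_fst_apply]

/-- Elements of `X` are determined by their inner products with `A · X`. -/
lemma _root_.HilbertBimodule.eq_of_innerR_smulL {y z : X}
    (h : ∀ a t, hX.innerR y (hX.smulL a t) = hX.innerR z (hX.smulL a t)) : y = z := by
  refine hX.eq_of_innerR fun t => ?_
  have := hX.mem_of_smulL_mem (LinearMap.eqLocus (hX.inn y : X →ₗ[ℂ] B) (hX.inn z))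
    (isClosed_eq (hX.inn y).continuous (hX.inn z).continuous) h t
  exact this

variable {mX} in
/-- For an element `m` of `M(X)` acting on `B` as the operator `f`, membership in `C(X, ι, ζ)`
need only be tested on matrix units: the commutation relation is linear and continuous
in `k`, and the elements `k` with `m · ζ(k) ∈ X` form a closed subspace. -/
lemma mem_bimodRelComm (U : MatrixUnits K) (ι : K →⋆ₙₐ[ℂ] 𝓜(ℂ, A)) (ζ : K →⋆ₙₐ[ℂ] 𝓜(ℂ, B))
    {m : MX} (f : B →L[ℂ] X) (hm : ∀ b : B, mX.smulR m b = mX.embed (f b)) (W : ℕ → ℕ → X)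
    (hW : ∀ p q y, f ((ζ (U.u p q)).fst y) = hX.smulR (W p q) y)
    (hcomm : ∀ p q y a t, hX.innerR (f y) (hX.smulL ((ι (star (U.u p q))).fst a) t) =
      hX.innerR (f ((ζ (U.u p q)).fst y)) (hX.smulL a t)) :
    m ∈ bimodRelComm ι ζ mX ∧ ∀ p q, mX.embed (W p q) = mX.smulR m (ζ (U.u p q)) := by
  have hiff : ∀ k x, mX.embed x = mX.smulR m (ζ k) ↔ ∀ y, hX.smulR x y = f ((ζ k).fst y) := by
    intro k x
    constructor
    · intro h y
      apply mX.embed_injective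
      rw [← hm, ← smulR_smulR_coe, ← h, mX.embed_smulR]
    · intro h
      refine mX.ext_right _ _ fun y => ?_
      rw [smulR_smulR_coe, hm, mX.embed_smulR, h]
  refine ⟨fun k => ⟨?_, ?_⟩, fun p q => (hiff _ _).2 fun y => (hW p q y).symm⟩
  · refine mX.ext_right _ _ fun y => ?_
    obtain ⟨z, hz⟩ := mX.smulR_coe_mem (mX.smulL (ι k) m) y
    rw [smulR_smulR_coe, hm, ← hz]
    rw [mX.smulL_smulR, hm] at hz
    congr 1
    refine hX.eq_of_innerR_smulL fun a t => ?_
    rw [mX.innerR_smulL_embed _ hz.symm, ← map_star]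
    refine dense_span_induction U.dense_span
      (P := fun k => hX.inn (f y) (hX.lAct ((ι (star k)).fst a) t) =
        hX.inn (f ((ζ k).fst y)) (hX.lAct a t)) ?_ ?_ ?_ ?_ ?_ k
    · rintro _ ⟨⟨p, q⟩, rfl⟩
      exact hcomm p q y a t
    · simp
    · intro k k' hk hk'
      simp [hk, hk']
    · intro c k hk
      simp [hk]
    · have h1 := continuous_fst_apply ι a
      have h2 := continuous_fst_apply ζ y
      have h3 : Continuous fun k => (ι (star k)).fst a := h1.comp continuous_star
      exact isClosed_eq (by fun_prop) (by fun_prop)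
  · suffices h : ∃ x, ∀ y, hX.smulR x y = f ((ζ k).fst y) by
      obtain ⟨x, hx⟩ := h
      exact ⟨x, (hiff k x).2 hx⟩
    refine dense_span_induction U.dense_span
      (P := fun k => ∃ x, ∀ y, hX.rAct x y = f ((ζ k).fst y)) ?_ ?_ ?_ ?_ ?_ k
    · rintro _ ⟨⟨p, q⟩, rfl⟩
      exact ⟨W p q, fun y => (hW p q y).symm⟩
    · exact ⟨0, by simp⟩
    · rintro k k' ⟨x, hx⟩ ⟨x', hx'⟩
      exact ⟨x + x', by simp [hx, hx']⟩
    · rintro c k ⟨x, hx⟩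
      exact ⟨c • x, by simp [hx]⟩
    · rw [← isSeqClosed_iff_isClosed]
      intro ks k hks hk
      simp only [Set.mem_ofPred_eq] at hks ⊢
      choose xs hxs using hks
      -- `x_k` with `x_k = m · ζ(k)` depends on `k` in a Lipschitz way, so limits of `k` lift.
      have hbd : ∀ i j, dist (xs i) (xs j) ≤ ‖f‖ * dist (ks i) (ks j) := fun i j => by
        rw [dist_eq_norm, dist_eq_norm]
        refine hX.norm_le_of_smulR_le (by positivity) fun b => ?_
        have h1 : hX.smulR (xs i - xs j) b = f ((ζ (ks i - ks j)).fst b) := by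
          rw [← HilbertBimodule.rAct_apply]
          simp [hxs]
        rw [h1, mul_assoc]
        refine (f.le_opNorm _).trans ?_
        gcongr
        refine (ContinuousLinearMap.le_opNorm _ _).trans ?_
        gcongr
        rw [DoubleCentralizer.norm_fst]
        exact NonUnitalStarAlgHom.norm_apply_le ζ _
      have hcs : CauchySeq xs := by
        have hk' := hk.cauchySeq
        rw [Metric.cauchySeq_iff] at hk' ⊢
        intro ε hε
        obtain ⟨N, hN⟩ := hk' (ε / (‖f‖ + 1)) (by positivity)
        refine ⟨N, fun i hi j hj => (hbd i j).trans_lt ?_⟩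
        have h1 := hN i hi j hj
        rw [lt_div_iff₀ (by positivity)] at h1
        nlinarith [dist_nonneg (x := ks i) (y := ks j)]
      obtain ⟨x, hx⟩ := cauchySeq_tendsto_of_complete hcs
      refine ⟨x, fun y => ?_⟩
      have h1 : Tendsto (fun n => hX.rAct (xs n) y) atTop (𝓝 (hX.rAct x y)) :=
        ((by fun_prop : Continuous fun x => hX.rAct x y).tendsto x).comp hx
      have h2 : Tendsto (fun n => f ((ζ (ks n)).fst y)) atTop (𝓝 (f ((ζ k).fst y))) :=
        ((f.continuous.comp (continuous_fst_apply ζ y)).tendsto k).comp hk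
      simp only [hxs] at h1
      exact tendsto_nhds_unique h1 h2

/-- The strictly convergent sum `m = ∑ₖ ι(e_{k0}) a · x · b⋆ ζ(e_{0k})` lies in `C(X, ι, ζ)`
and recovers every corner element `ι(e_{p0}) a · x · b⋆ ζ(e_{0q})` as `m · ζ(e_{pq})`. -/
lemma exists_mem_bimodRelComm (U : MatrixUnits K) {ι : K →⋆ₙₐ[ℂ] 𝓜(ℂ, A)}
    (hι : Nondegenerate ι) {ζ : K →⋆ₙₐ[ℂ] 𝓜(ℂ, B)} (hζ : Nondegenerate ζ)
    (a : A) (b : B) (x : X) :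
    ∃ m ∈ bimodRelComm ι ζ mX, ∀ p q, mX.embed (hX.smulL ((ι (U.u p 0)).fst a)
      (hX.smulR x (star ((ζ (U.u q 0)).fst b)))) = mX.smulR m (ζ (U.u p q)) := by
  set u : ℕ → A := fun p => (ι (U.u p 0)).fst a with hu
  set v : ℕ → B := fun q => (ζ (U.u q 0)).fst b with hv
  have hvmul : ∀ k p q y, star (v k) * (ζ (U.u p q)).fst y =
      if k = p then star (v q) * y else 0 := fun k p q y => star_column_mul U ζ b y k p q
  have humul : ∀ k p q y, star (u k) * (ι (U.u p q)).fst y =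
      if k = p then star (u q) * y else 0 := fun k p q y => star_column_mul U ι a y k p q
  obtain ⟨h, hh⟩ := hX.innerR_self_nonneg (hX.smulL (u 0) x)
  have hSX : Dense (Submodule.span ℂ
      {z : X | ∃ p a t, z = hX.smulL ((ι (U.u p 0)).fst a) t} : Set X) := fun z =>
    hX.mem_of_corner_mem U hι hζ (Submodule.span ℂ
      {z : X | ∃ p a t, z = hX.smulL ((ι (U.u p 0)).fst a) t}).topologicalClosure
      (Submodule.isClosed_topologicalClosure _)
      (fun p q a b x => Submodule.le_topologicalClosure _
        (Submodule.subset_span ⟨p, a, _, rfl⟩)) z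
  have huu : ∀ k l, star (u k) * u l = if k = l then star (u 0) * u 0 else 0 := fun k l => by
    rw [humul k l 0 a, humul 0 0 0 a, if_pos rfl]
  have hbd : ∀ n, ‖∑ k ∈ Finset.range n,
      v k * hX.innerR (hX.smulL (u 0) x) (hX.smulL (u 0) x) * star (v k)‖ ≤
      ‖(b * star h) * star (b * star h)‖ := fun n => by
    rw [hh, ← coe_norm, coe_sum']
    refine le_trans (le_of_eq ?_) (norm_sum_conj_le U ζ (b * star h) n)
    congr 1
    refine Finset.sum_congr rfl fun k _ => ?_
    simp only [hv, coe_mul', coe_star', coe_fst_apply, star_mul, star_star, mul_assoc]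
  obtain ⟨f, g, hf, hg, hfg⟩ := hX.exists_column u v x _ huu hbd (hζ.dense_span U)
    (by
      rintro _ ⟨p, y, rfl⟩
      exact ⟨p, fun k hk => by rw [hvmul, if_neg hk]⟩)
    hSX
    (by
      rintro _ ⟨p, a, t, rfl⟩
      refine ⟨p, fun k hk => ?_⟩
      rw [← hX.smulL_mul, humul, if_neg hk, ← hX.lAct_apply, map_zero, _root_.zero_apply])
  have hfW : ∀ p q y, f ((ζ (U.u p q)).fst y) =
      hX.smulR (hX.smulL (u p) (hX.smulR x (star (v q)))) y := fun p q y => by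
    have h1 := tendsto_sum_single
      (fun k => hX.smulL (u k) (hX.smulR x (star (v k) * (ζ (U.u p q)).fst y))) p
      (fun k hk => by
        rw [hvmul, if_neg hk, ← hX.rAct_apply, map_zero, ← hX.lAct_apply, map_zero])
    rw [tendsto_nhds_unique (hf _) h1, hvmul, if_pos rfl, hX.smulR_mul, hX.smulL_smulR]
  have hgW : ∀ p q a' t, g (hX.smulL ((ι (U.u q p)).fst a') t) =
      v q * hX.innerR x (hX.smulL (star (u p) * a') t) := fun p q a' t => by
    have h1 := tendsto_sum_single
      (fun k => v k * hX.innerR x (hX.smulL (star (u k)) (hX.smulL ((ι (U.u q p)).fst a') t))) q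
      (fun k hk => by
        rw [← hX.smulL_mul, humul, if_neg hk, ← hX.lAct_apply, map_zero, _root_.zero_apply,
          ← hX.inn_apply, map_zero, mul_zero])
    rw [tendsto_nhds_unique (hg _) h1, ← hX.smulL_mul, humul, if_pos rfl]
  obtain ⟨m, hm⟩ := mX.exists_of_adjointable f g (map_add f) (fun y y' => by
    refine tendsto_nhds_unique (hf _) ?_
    have h1 := ((hX.rAct.flip y').continuous.tendsto _).comp (hf y)
    refine h1.congr fun n => ?_
    simp only [Function.comp_apply, map_sum, ContinuousLinearMap.flip_apply]
    refine Finset.sum_congr rfl fun k _ => ?_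
    rw [hX.rAct_apply, hX.smulL_smulR, ← hX.smulR_mul, mul_assoc]) hfg
  refine ⟨m, mem_bimodRelComm U ι ζ f hm _ hfW fun p q y a' t => ?_⟩
  have hleft : ∀ (y : X) (b : B) (z : X),
      hX.innerR (hX.smulR y b) z = star b * hX.innerR y z := fun y b z => by
    rw [← hX.star_innerR, hX.innerR_smulR, star_mul, hX.star_innerR]
  rw [hfW, hfg, U.star_u, hgW, hleft, hX.innerR_smulL, hleft, star_star, hX.smulL_mul]

end MultiplierBimodule

end Helpers

/-- Let `(A, ι)` and `(B, ζ)` be `𝒦`-algebras and `X` an `A`–`B`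
Hilbert bimodule.  When `X` is regarded as a `(C(A,ι) ⊗ 𝒦)`–`(C(B,ζ) ⊗ 𝒦)` Hilbert
bimodule via the canonical isomorphisms `A ≅ C(A,ι) ⊗ 𝒦` (`a ⊗ k ↦ a·ι(k)`) and
`B ≅ C(B,ζ) ⊗ 𝒦`, there is an isomorphism of Hilbert bimodules
`C(X, ι, ζ) ⊗ 𝒦 ≅ X` given on elementary tensors by `x ⊗ k ↦ x·ζ(k)`.

This is expressed by saying that the map `m ⊗ k ↦ m·ζ(k)` (i) takes values in `X`,
(ii) has range with dense linear span in `X`, (iii) preserves the left and right inner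
products (which also makes the induced map on `C(X, ι, ζ) ⊙ 𝒦` isometric, hence
injective), and (iv) intertwines the left and right module actions, where on the tensor
product side elementary tensors of `C(A,ι) ⊗ 𝒦` and `C(B,ζ) ⊗ 𝒦` act through the above
canonical isomorphisms. -/
theorem bimodRelComm_tensor_compacts_iso
    {K A B X MX : Type*} [NonUnitalCStarAlgebra K] [NonUnitalCStarAlgebra A]
    [NonUnitalCStarAlgebra B] [NormedAddCommGroup X] [NormedSpace ℂ X] [CompleteSpace X]
    [NormedAddCommGroup MX] [NormedSpace ℂ MX]
    (hK : IsCompactOperatorsAlgebra K)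
    (ι : K →⋆ₙₐ[ℂ] 𝓜(ℂ, A)) (hι : Nondegenerate ι)
    (ζ : K →⋆ₙₐ[ℂ] 𝓜(ℂ, B)) (hζ : Nondegenerate ζ)
    (hX : HilbertBimodule A B X) (mX : MultiplierBimodule hX MX) :
    -- (i) `m ⊗ k ↦ m·ζ(k)` takes values in `X`
    (∀ m ∈ bimodRelComm ι ζ mX, ∀ k : K, mX.smulR m (ζ k) ∈ Set.range mX.embed) ∧
    -- (ii) the range of the map has dense linear span in `X`
    Dense (Submodule.span ℂ {x : X | ∃ m ∈ bimodRelComm ι ζ mX, ∃ k : K,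
      mX.embed x = mX.smulR m (ζ k)} : Set X) ∧
    -- (iii) the map preserves both inner products (hence is isometric and injective):
    -- `⟨m ⊗ k, m' ⊗ k'⟩_B = ⟨m, m'⟩·ζ(k⋆k')` and `⟨m ⊗ k, m' ⊗ k'⟩_A = ⟨m, m'⟩·ι(k k'⋆)`
    (∀ m ∈ bimodRelComm ι ζ mX, ∀ m' ∈ bimodRelComm ι ζ mX, ∀ (k k' : K) (x x' : X),
      mX.embed x = mX.smulR m (ζ k) → mX.embed x' = mX.smulR m' (ζ k') →
      ((hX.innerR x x' : B) : 𝓜(ℂ, B)) = mX.innerR m m' * ζ (star k * k') ∧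
        ((hX.innerL x x' : A) : 𝓜(ℂ, A)) = mX.innerL m m' * ι (k * star k')) ∧
    -- (iv) the map intertwines the module actions:
    -- `(a ⊗ k₀)·(m ⊗ k) ↦ (a·ι(k₀))·(m·ζ(k)) = (a·m)·ζ(k₀k)`
    (∀ a ∈ relComm ι, ∀ (k₀ : K), ∀ m ∈ bimodRelComm ι ζ mX, ∀ (k : K) (x : X),
      mX.embed x = mX.smulR m (ζ k) →
      mX.smulL (a * ι k₀) (mX.embed x) = mX.smulR (mX.smulL a m) (ζ (k₀ * k))) ∧
    -- `(m ⊗ k)·(b ⊗ k₀) ↦ (m·ζ(k))·(b·ζ(k₀)) = (m·b)·ζ(k·k₀)`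
    (∀ b ∈ relComm ζ, ∀ (k₀ : K), ∀ m ∈ bimodRelComm ι ζ mX, ∀ (k : K) (x : X),
      mX.embed x = mX.smulR m (ζ k) →
      mX.smulR (mX.embed x) (b * ζ k₀) = mX.smulR (mX.smulR m b) (ζ (k * k₀))) := by
  obtain ⟨U⟩ := hK
  have hcm : ∀ m ∈ bimodRelComm ι ζ mX, ∀ k, mX.smulL (ι k) m = mX.smulR m (ζ k) :=
    fun m hm k => (hm k).1
  refine ⟨fun m hm k => (hm k).2, ?_, ?_, ?_, ?_⟩
  · intro x
    refine hX.mem_of_corner_mem U hι hζ (Submodule.span ℂ {x : X | ∃ m ∈ bimodRelComm ι ζ mX,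
      ∃ k : K, mX.embed x = mX.smulR m (ζ k)}).topologicalClosure
      (Submodule.isClosed_topologicalClosure _) (fun p q a b x => ?_) x
    obtain ⟨m, hm, hmW⟩ := mX.exists_mem_bimodRelComm U hι hζ a b x
    exact Submodule.le_topologicalClosure _ (Submodule.subset_span ⟨m, hm, _, hmW p q⟩)
  · intro m hm m' hm' k k' x x' hx hx'
    constructor
    · -- `⟨m·ζ(k), m'·ζ(k')⟩ = ⟨ι(k)·m, m'·ζ(k')⟩ = ⟨m, ι(k⋆)·m'·ζ(k')⟩ = ⟨m, m'·ζ(k⋆k')⟩`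
      rw [← mX.embed_innerR, hx, hx', ← hcm m hm, mX.innerR_smulL, ← map_star,
        ← mX.smulL_smulR, hcm m' hm', ← mX.smulR_mul, ← map_mul, mX.innerR_smulR]
    · -- `⟨m·ζ(k), m'·ζ(k')⟩ = ⟨m, m'·ζ(k'k⋆)⟩ = ⟨m, ι(k'k⋆)·m'⟩ = ⟨m, m'⟩·ι(kk'⋆)`
      rw [← mX.embed_innerL, hx, hx', mX.innerL_smulR, ← mX.smulR_mul, ← map_star, ← map_mul,
        ← hcm m' hm', ← mX.star_innerL, mX.innerL_smulL, star_mul, mX.star_innerL, ← map_star,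
        star_mul, star_star]
  · intro a _ k₀ m hm k x hx
    rw [hx, mX.smulL_mul, ← mX.smulL_smulR, hcm m hm, map_mul, mX.smulR_mul, mX.smulL_smulR,
      mX.smulL_smulR]
  · intro b hb k₀ m _ k x hx
    rw [hx, ← mX.smulR_mul, ← mul_assoc, (hb k).1, mul_assoc, ← map_mul, mX.smulR_mul]
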